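/- Let μ ≥ 1. Let X' ∈ ℝ^{m'×2} (m' ≥ 1) and X'' ∈ ℝ^{m''×2} each be μ-complex in both the ℓ₀ and ℓ₁ sense, with ‖X''η‖₁ ≤ 2μ·‖X'η‖₁ for all η ∈ ℝ². Let X ∈ ℝ^{m×2} be their vertical concatenation, let U ∈ ℝ^{m×2} have orthonormal columns with X = U·R for some R ∈ ℝ^{2×2}, and let c_1,…,c_m ∈ [0,1/2). Define f₁(Xβ) = ∑_{i ∈ rows of X'} g_{c_i}(x_i·β) and f₂(Xβ) = ∑_{i ∈ rows of X''} h_{c_i}(x_i·β). Then: (i) for every row index i of X' and every β ∈ ℝ², g_{c_i}(x_i·β) ≤ 42.5·μ²·(‖U_i‖₂ + 1/m')·(f₁(Xβ) + f₂(Xβ)), where U_i is the corresponding row of U; and (ii) ∑_{i ∈ rows of X'} 42.5·μ²·(‖U_i‖₂ + 1/m') ≤ 170·μ²·√(m'). -/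

import Mathlib

/-!
Write `y i = X' i ⬝ᵥ β` and `f₁ = ∑ g (y i)`, and note that `f₂ ≥ 0`. Since `g_c(z) ≥ max(z, 0)` and
`g_c(z) ≥ log 2` for `z ≥ 0`, the two complexity conditions in the direction `-β` give
`‖X'β‖₁ ≤ (1 + μ) f₁` (`l1_le_sum_gfun`) and `m' log 2 ≤ (1 + μ) f₁` (`card_mul_log_two_le`).

As `U` has orthonormal columns, Cauchy–Schwarz gives `|y i| ≤ ‖U_i‖₂ ‖Xβ‖₂ ≤ ‖U_i‖₂ ‖Xβ‖₁`
(`abs_le_row_norm_mul_l1`), and `‖Xβ‖₁ ≤ (1 + 2μ) ‖X'β‖₁` by the ratio hypothesis, so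
`|y i| ≤ 6 μ² ‖U_i‖₂ f₁`. Finally `g_c(z) ≤ |z| + 2 log 2` for `c < 1/2`, which
bounds `g (y i)` by `6 μ² ‖U_i‖₂ f₁ + 4 μ² f₁ / m'`. The bound on the sum of the sensitivities is
Cauchy–Schwarz together with `∑ ‖U_i‖₂² = 2`.
-/

open Finset Matrix

/-- `g_c(z) = ln(1+e^z) - ln(1-c)`. -/
noncomputable def gfun (c z : ℝ) : ℝ := Real.log (1 + Real.exp z) - Real.log (1 - c)

/-- `h_c(z) = -ln(c + (1-c)/(1+e^{-z}))`. -/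
noncomputable def hfun (c z : ℝ) : ℝ := -Real.log (c + (1 - c) / (1 + Real.exp (-z)))

/-- The rows `x` are `μ`-complex in the ℓ₁ sense. -/
def Mu1Complex {ι : Type} [Fintype ι] {d : ℕ} (x : ι → Fin d → ℝ) (μ : ℝ) : Prop :=
  ∀ η : Fin d → ℝ,
    ∑ i ∈ Finset.univ.filter (fun i => 0 ≤ x i ⬝ᵥ η), x i ⬝ᵥ η ≤
      μ * ∑ i ∈ Finset.univ.filter (fun i => x i ⬝ᵥ η < 0), |x i ⬝ᵥ η|

/-- The rows `x` are `μ`-complex in the ℓ₀ sense. -/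
def Mu0Complex {ι : Type} [Fintype ι] {d : ℕ} (x : ι → Fin d → ℝ) (μ : ℝ) : Prop :=
  ∀ η : Fin d → ℝ, η ≠ 0 →
    ((Finset.univ.filter fun i => 0 ≤ x i ⬝ᵥ η).card : ℝ) ≤
      μ * ((Finset.univ.filter fun i => x i ⬝ᵥ η < 0).card : ℝ)

lemma log_le_gfun {c : ℝ} (hc : 0 ≤ c ∧ c < 1 / 2) (z : ℝ) :
    Real.log (1 + Real.exp z) ≤ gfun c z := by
  have : Real.log (1 - c) ≤ 0 := Real.log_nonpos (by linarith [hc.2]) (by linarith [hc.1])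
  unfold gfun; linarith

lemma le_gfun {c : ℝ} (hc : 0 ≤ c ∧ c < 1 / 2) (z : ℝ) : z ≤ gfun c z := by
  refine le_trans ?_ (log_le_gfun hc z)
  rw [Real.le_log_iff_exp_le (by positivity)]
  linarith

lemma gfun_nonneg {c : ℝ} (hc : 0 ≤ c ∧ c < 1 / 2) (z : ℝ) : 0 ≤ gfun c z :=
  le_trans (Real.log_nonneg (by linarith [Real.exp_pos z])) (log_le_gfun hc z)

lemma log_two_le_gfun {c : ℝ} (hc : 0 ≤ c ∧ c < 1 / 2) {z : ℝ} (hz : 0 ≤ z) :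
    Real.log 2 ≤ gfun c z := by
  refine le_trans ?_ (log_le_gfun hc z)
  exact Real.log_le_log (by norm_num) (by linarith [Real.one_le_exp hz])

lemma gfun_le {c : ℝ} (hc : 0 ≤ c ∧ c < 1 / 2) (z : ℝ) :
    gfun c z ≤ |z| + 2 * Real.log 2 := by
  have h1 : Real.log (1 + Real.exp z) ≤ |z| + Real.log 2 := by
    rw [Real.log_le_iff_le_exp (by positivity), Real.exp_add, Real.exp_log (by norm_num)]
    linarith [Real.exp_le_exp.2 (le_abs_self z), Real.one_le_exp (abs_nonneg z)]
  have h2 : -Real.log 2 ≤ Real.log (1 - c) := by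
    rw [← Real.log_inv]
    exact Real.log_le_log (by norm_num) (by norm_num; linarith [hc.2])
  unfold gfun; linarith

lemma hfun_nonneg {c : ℝ} (hc : 0 ≤ c ∧ c < 1 / 2) (z : ℝ) : 0 ≤ hfun c z := by
  have h0 : 0 < 1 - c := by linarith [hc.2]
  have hp : 0 < (1 - c) / (1 + Real.exp (-z)) := by positivity
  have h1 : (1 - c) / (1 + Real.exp (-z)) ≤ 1 - c :=
    div_le_self h0.le (by linarith [Real.exp_pos (-z)])
  unfold hfun
  have := Real.log_nonpos (x := c + (1 - c) / (1 + Real.exp (-z)))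
    (by linarith [hc.1]) (by linarith)
  linarith

/-- Only rows with positive value are needed to bound the objective from below; the
`ℓ₁` condition in the direction `-β` controls the remaining part of `‖Xβ‖₁`. -/
lemma l1_le_sum_gfun {m : ℕ} {μ : ℝ} (hμ : 1 ≤ μ) {X : Fin m → Fin 2 → ℝ}
    (hX : Mu1Complex X μ) {c : Fin m → ℝ} (hc : ∀ i, 0 ≤ c i ∧ c i < 1 / 2) (β : Fin 2 → ℝ) :
    ∑ i, |X i ⬝ᵥ β| ≤ (1 + μ) * ∑ i, gfun (c i) (X i ⬝ᵥ β) := by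
  have h := hX (-β)
  simp only [dotProduct_neg, abs_neg] at h
  have hsplit := Finset.sum_filter_add_sum_filter_not Finset.univ
    (fun i => 0 ≤ -(X i ⬝ᵥ β)) (fun i => |X i ⬝ᵥ β|)
  simp only [not_le] at hsplit
  have hneg : ∑ i with 0 ≤ -(X i ⬝ᵥ β), |X i ⬝ᵥ β| = ∑ i with 0 ≤ -(X i ⬝ᵥ β), -(X i ⬝ᵥ β) := by
    refine Finset.sum_congr rfl fun i hi => abs_of_nonpos ?_
    have := (Finset.mem_filter.1 hi).2
    linarith
  have hpos : ∑ i with -(X i ⬝ᵥ β) < 0, |X i ⬝ᵥ β| ≤ ∑ i, gfun (c i) (X i ⬝ᵥ β) := by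
    refine le_trans (Finset.sum_le_sum fun i hi => ?_)
      (Finset.sum_le_sum_of_subset_of_nonneg (Finset.filter_subset _ _)
        fun i _ _ => gfun_nonneg (hc i) _)
    have := (Finset.mem_filter.1 hi).2
    rw [abs_of_pos (by linarith)]
    exact le_gfun (hc i) _
  nlinarith

/-- The `ℓ₀` condition in the direction `-β` makes at least `m / (1 + μ)` of the rows positive,
and each of those contributes at least `log 2`; for `β = 0` every row contributes `log 2`. -/
lemma card_mul_log_two_le {m : ℕ} {μ : ℝ} (hμ : 1 ≤ μ) {X : Fin m → Fin 2 → ℝ}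
    (hX : Mu0Complex X μ) {c : Fin m → ℝ} (hc : ∀ i, 0 ≤ c i ∧ c i < 1 / 2) (β : Fin 2 → ℝ) :
    m * Real.log 2 ≤ (1 + μ) * ∑ i, gfun (c i) (X i ⬝ᵥ β) := by
  have hl : 0 < Real.log 2 := Real.log_pos (by norm_num)
  have hf : 0 ≤ ∑ i, gfun (c i) (X i ⬝ᵥ β) := Finset.sum_nonneg fun i _ => gfun_nonneg (hc i) _
  by_cases hβ : β = 0
  · have : ∑ _i : Fin m, Real.log 2 ≤ ∑ i, gfun (c i) (X i ⬝ᵥ β) :=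
      Finset.sum_le_sum fun i _ => log_two_le_gfun (hc i) (by simp [hβ])
    simp only [Finset.sum_const, Finset.card_univ, Fintype.card_fin, nsmul_eq_mul] at this
    nlinarith
  · have h := hX (-β) (neg_ne_zero.2 hβ)
    simp only [dotProduct_neg] at h
    have hsplit := Finset.card_filter_add_card_filter_not (s := Finset.univ)
      (fun i : Fin m => 0 ≤ -(X i ⬝ᵥ β))
    simp only [not_le, Finset.card_univ, Fintype.card_fin] at hsplit
    have hsplit' := congrArg (Nat.cast (R := ℝ)) hsplit
    push_cast at hsplit'
    have hpos : ∑ i with -(X i ⬝ᵥ β) < 0, Real.log 2 ≤ ∑ i, gfun (c i) (X i ⬝ᵥ β) := by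
      refine le_trans (Finset.sum_le_sum fun i hi => ?_)
        (Finset.sum_le_sum_of_subset_of_nonneg (Finset.filter_subset _ _)
          fun i _ _ => gfun_nonneg (hc i) _)
      have := (Finset.mem_filter.1 hi).2
      exact log_two_le_gfun (hc i) (by linarith)
    simp only [Finset.sum_const, nsmul_eq_mul] at hpos
    calc m * Real.log 2
        ≤ ((1 + μ) * ((Finset.univ.filter fun i => -(X i ⬝ᵥ β) < 0).card : ℝ)) * Real.log 2 := by
          gcongr; linarith
      _ = (1 + μ) * (((Finset.univ.filter fun i => -(X i ⬝ᵥ β) < 0).card : ℝ) * Real.log 2) := by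
          ring
      _ ≤ _ := by gcongr

/-- If `v = U w` with `U` having orthonormal columns, then `‖w‖₂ = ‖v‖₂ ≤ ‖v‖₁`, so each entry
of `v` is at most the norm of the corresponding row of `U` times `‖v‖₁`. -/
lemma abs_le_row_norm_mul_l1 {ι : Type} [Fintype ι] {U : ι → Fin 2 → ℝ}
    (hU : ∀ k l : Fin 2, ∑ i, U i k * U i l = if k = l then (1 : ℝ) else 0)
    (w : Fin 2 → ℝ) (i : ι) :
    |U i ⬝ᵥ w| ≤ Real.sqrt (∑ k, (U i k) ^ 2) * ∑ j, |U j ⬝ᵥ w| := by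
  have hiso : ∑ j, (U j ⬝ᵥ w) ^ 2 = ∑ k, (w k) ^ 2 := by
    have h : ∀ j, (U j ⬝ᵥ w) ^ 2 = (U j 0 * U j 0) * (w 0) ^ 2 +
        (U j 0 * U j 1) * (2 * w 0 * w 1) + (U j 1 * U j 1) * (w 1) ^ 2 := by
      intro j
      simp only [dotProduct, Fin.sum_univ_two]
      ring
    simp only [h, Finset.sum_add_distrib, ← Finset.sum_mul, hU, Fin.sum_univ_two]
    simp
  have hS : 0 ≤ ∑ j, |U j ⬝ᵥ w| := Finset.sum_nonneg fun j _ => abs_nonneg _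
  have hl1 : ∑ k, (w k) ^ 2 ≤ (∑ j, |U j ⬝ᵥ w|) ^ 2 := by
    rw [← hiso, sq, Finset.sum_mul]
    refine Finset.sum_le_sum fun j _ => ?_
    rw [← sq_abs, sq]
    exact mul_le_mul_of_nonneg_left
      (Finset.single_le_sum (f := fun j => |U j ⬝ᵥ w|) (fun j _ => abs_nonneg _)
        (Finset.mem_univ j)) (abs_nonneg _)
  have hcs : (U i ⬝ᵥ w) ^ 2 ≤ (∑ k, (U i k) ^ 2) * ∑ k, (w k) ^ 2 :=
    Finset.sum_mul_sq_le_sq_mul_sq Finset.univ (U i) w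
  refine abs_le_of_sq_le_sq ?_ (by positivity)
  rw [mul_pow, Real.sq_sqrt (by positivity)]
  exact hcs.trans (mul_le_mul_of_nonneg_left hl1 (by positivity))

lemma sum_row_norm_le {m' m'' : ℕ} {U : Fin m' ⊕ Fin m'' → Fin 2 → ℝ}
    (hU : ∀ k l : Fin 2, ∑ i, U i k * U i l = if k = l then (1 : ℝ) else 0) :
    ∑ i : Fin m', Real.sqrt (∑ k, (U (Sum.inl i) k) ^ 2) ≤ 2 * Real.sqrt m' := by
  have hfrob : ∑ i : Fin m', ∑ k, (U (Sum.inl i) k) ^ 2 ≤ 2 := by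
    have h : ∑ i, ∑ k, (U i k) ^ 2 = 2 := by
      rw [Finset.sum_comm]
      simp only [sq, hU]
      simp
    rw [Fintype.sum_sum_type] at h
    have : 0 ≤ ∑ i : Fin m'', ∑ k, (U (Sum.inr i) k) ^ 2 := by positivity
    linarith
  have hcs := sq_sum_le_card_mul_sum_sq (s := (Finset.univ : Finset (Fin m')))
    (f := fun i => Real.sqrt (∑ k, (U (Sum.inl i) k) ^ 2))
  have hsq : ∀ i : Fin m', Real.sqrt (∑ k, (U (Sum.inl i) k) ^ 2) ^ 2
      = ∑ k, (U (Sum.inl i) k) ^ 2 := fun i => Real.sq_sqrt (by positivity)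
  simp only [hsq, Finset.card_univ, Fintype.card_fin] at hcs
  refine le_of_sq_le_sq ?_ (by positivity)
  rw [mul_pow, Real.sq_sqrt (by positivity)]
  have hm : (0 : ℝ) ≤ m' := by positivity
  nlinarith

/-- Sensitivity bounds for the logistic summands of the 3PL objective `f₁ + f₂`:
(i) each sensitivity is at most `s'_i = 42.5 μ² (‖U_i‖₂ + 1/m')`, and
(ii) `∑ s'_i ≤ 170 μ² √m'`. -/
theorem stmt13 {m' m'' : ℕ} (hm : 1 ≤ m') (μ : ℝ) (hμ : 1 ≤ μ)
    (X' : Fin m' → Fin 2 → ℝ) (X'' : Fin m'' → Fin 2 → ℝ)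
    (hX'1 : Mu1Complex X' μ) (hX'0 : Mu0Complex X' μ)
    (hX''1 : Mu1Complex X'' μ) (hX''0 : Mu0Complex X'' μ)
    (hratio : ∀ η : Fin 2 → ℝ, ∑ i, |X'' i ⬝ᵥ η| ≤ 2 * μ * ∑ i, |X' i ⬝ᵥ η|)
    (U : Fin m' ⊕ Fin m'' → Fin 2 → ℝ)
    (hU : ∀ k l : Fin 2, ∑ i, U i k * U i l = if k = l then (1 : ℝ) else 0)
    (R : Matrix (Fin 2) (Fin 2) ℝ)
    (hXUR : ∀ i k, Sum.elim X' X'' i k = ∑ l, U i l * R l k)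
    (c : Fin m' ⊕ Fin m'' → ℝ) (hc : ∀ i, 0 ≤ c i ∧ c i < 1 / 2) :
    (∀ (i : Fin m') (β : Fin 2 → ℝ),
        gfun (c (Sum.inl i)) (X' i ⬝ᵥ β) ≤
          42.5 * μ ^ 2 * (Real.sqrt (∑ k, (U (Sum.inl i) k) ^ 2) + 1 / (m' : ℝ)) *
            ((∑ i', gfun (c (Sum.inl i')) (X' i' ⬝ᵥ β)) +
              ∑ i', hfun (c (Sum.inr i')) (X'' i' ⬝ᵥ β))) ∧
      ∑ i : Fin m',
          42.5 * μ ^ 2 * (Real.sqrt (∑ k, (U (Sum.inl i) k) ^ 2) + 1 / (m' : ℝ)) ≤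
        170 * μ ^ 2 * Real.sqrt (m' : ℝ) := by
  have hm0 : (1 : ℝ) ≤ m' := by exact_mod_cast hm
  refine ⟨fun i β => ?_, ?_⟩
  · set f₁ := ∑ i', gfun (c (Sum.inl i')) (X' i' ⬝ᵥ β) with hf₁
    have hf₁0 : 0 ≤ f₁ := Finset.sum_nonneg fun i _ => gfun_nonneg (hc _) _
    have hf₂0 : 0 ≤ ∑ i', hfun (c (Sum.inr i')) (X'' i' ⬝ᵥ β) :=
      Finset.sum_nonneg fun i _ => hfun_nonneg (hc _) _
    have hl1 := l1_le_sum_gfun hμ hX'1 (c := fun i => c (Sum.inl i)) (fun _ => hc _) β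
    have hl0 := card_mul_log_two_le hμ hX'0 (c := fun i => c (Sum.inl i)) (fun _ => hc _) β
    rw [← hf₁] at hl1 hl0
    have hXU : ∀ j, Sum.elim X' X'' j ⬝ᵥ β = U j ⬝ᵥ (R *ᵥ β) := by
      intro j
      simp only [mulVec, dotProduct, Fin.sum_univ_two, hXUR]
      ring
    have hrow := abs_le_row_norm_mul_l1 hU (R *ᵥ β) (Sum.inl i)
    simp only [← hXU, Fintype.sum_sum_type, Sum.elim_inl, Sum.elim_inr] at hrow
    set s := Real.sqrt (∑ k, (U (Sum.inl i) k) ^ 2)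
    have hs : 0 ≤ s := Real.sqrt_nonneg _
    have hμ2 : μ ≤ μ ^ 2 := by nlinarith
    have htot : ∑ j, |X' j ⬝ᵥ β| + ∑ j, |X'' j ⬝ᵥ β| ≤ 6 * μ ^ 2 * f₁ := by
      have h1 : ∑ j, |X' j ⬝ᵥ β| + ∑ j, |X'' j ⬝ᵥ β| ≤ (1 + 2 * μ) * ((1 + μ) * f₁) := by
        calc _ ≤ (1 + 2 * μ) * ∑ j, |X' j ⬝ᵥ β| := by linarith [hratio β]
          _ ≤ _ := by gcongr
      have h2 : (1 + 2 * μ) * (1 + μ) ≤ 6 * μ ^ 2 := by nlinarith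
      nlinarith [mul_le_mul_of_nonneg_right h2 hf₁0]
    have hlog : Real.log 2 ≤ 2 * μ ^ 2 * f₁ / m' := by
      rw [le_div_iff₀ (by linarith)]
      have : (1 + μ) * f₁ ≤ 2 * μ ^ 2 * f₁ := by gcongr; linarith
      linarith
    calc gfun (c (Sum.inl i)) (X' i ⬝ᵥ β) ≤ |X' i ⬝ᵥ β| + 2 * Real.log 2 := gfun_le (hc _) _
      _ ≤ s * (6 * μ ^ 2 * f₁) + 2 * (2 * μ ^ 2 * f₁ / m') := by
          have := mul_le_mul_of_nonneg_left htot hs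
          linarith
      _ = 6 * μ ^ 2 * s * f₁ + 4 * μ ^ 2 * (1 / m') * f₁ := by ring
      _ ≤ 42.5 * μ ^ 2 * s * f₁ + 42.5 * μ ^ 2 * (1 / m') * f₁ := by
          gcongr <;> norm_num
      _ = 42.5 * μ ^ 2 * (s + 1 / m') * f₁ := by ring
      _ ≤ _ := by gcongr; linarith
  · have hsum := sum_row_norm_le hU
    rw [← Finset.mul_sum, Finset.sum_add_distrib]
    have h1 : ∑ _i : Fin m', 1 / (m' : ℝ) = 1 := by
      simp only [Finset.sum_const, Finset.card_univ, Fintype.card_fin, nsmul_eq_mul]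
      field_simp
    rw [h1]
    have hsq : 1 ≤ Real.sqrt (m' : ℝ) := Real.one_le_sqrt.2 hm0
    calc 42.5 * μ ^ 2 * (∑ i : Fin m', Real.sqrt (∑ k, (U (Sum.inl i) k) ^ 2) + 1)
        ≤ 42.5 * μ ^ 2 * (4 * Real.sqrt m') := by gcongr; linarith
      _ = _ := by ring
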